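/- Under the symbolwise construction (Context B), for all n ≥ 1: P_n^e = Pr{(X^n, Y^n) ∉ 𝒜_n*}, H(S^n|X^n) = H(S^n|Y^n) = H(S^n) = n·H(S), and I(X^n;Y^n) = n·ℓ; moreover lim_{n→∞} P_n^e = 0 and liminf_{n→∞} min{ −(1/n) log₂ P_n^X , −(1/n) log₂ P_n^Y } ≥ ℓ, so the sequence {(φ_n*, ψ_n*)}_{n≥1} asymptotically realizes a (2,2)-threshold scheme with correlation level ℓ. -/

import Mathlib

open Finset Filter Real
open scoped BigOperators

noncomputable section

/-- `p` is a probability mass function on a finite type. -/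
def IsPMF {α : Type*} [Fintype α] (p : α → ℝ) : Prop :=
  (∀ a, 0 ≤ p a) ∧ ∑ a, p a = 1

open scoped Classical in
/-- The distribution (pushforward pmf) of a random variable `X`
defined on a finite sample space carrying the pmf `p`. -/
def distOf {Ω α : Type*} [Fintype Ω] (p : Ω → ℝ) (X : Ω → α) (x : α) : ℝ :=
  ∑ ω ∈ Finset.univ.filter fun ω => X ω = x, p ω

/-- Base-2 Shannon entropy of a pmf on a finite type
(the convention `0 · log₂ 0 = 0` holds since `Real.logb 2 0 = 0`). -/
def ent {α : Type*} [Fintype α] (q : α → ℝ) : ℝ :=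
  -∑ x, q x * Real.logb 2 (q x)

/-- Base-2 entropy `H(X)` of a random variable `X` under pmf `p`. -/
def entRV {Ω α : Type*} [Fintype Ω] [Fintype α] (p : Ω → ℝ) (X : Ω → α) : ℝ :=
  ent (distOf p X)

/-- Base-2 conditional entropy `H(X|Y) = H(X,Y) − H(Y)`. -/
def condEnt {Ω α β : Type*} [Fintype Ω] [Fintype α] [Fintype β]
    (p : Ω → ℝ) (X : Ω → α) (Y : Ω → β) : ℝ :=
  entRV p (fun ω => (X ω, Y ω)) - entRV p Y

/-- Base-2 mutual information `I(X;Y) = H(X) + H(Y) − H(X,Y)`. -/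
def MI {Ω α β : Type*} [Fintype Ω] [Fintype α] [Fintype β]
    (p : Ω → ℝ) (X : Ω → α) (Y : Ω → β) : ℝ :=
  entRV p X + entRV p Y - entRV p (fun ω => (X ω, Y ω))

/-- `X` and `Y` are independent random variables under the pmf `p`. -/
def IndepRV {Ω α β : Type*} [Fintype Ω] (p : Ω → ℝ) (X : Ω → α) (Y : Ω → β) : Prop :=
  ∀ a b, distOf p (fun ω => (X ω, Y ω)) (a, b) = distOf p X a * distOf p Y b

variable {𝒮 𝒳 𝒴 : Type}

/-- Single-letter sample-space pmf on `𝒮 × 𝒰`: the secret `S ~ PS` and an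
independent uniform random number `U` on `𝒰`. -/
def p1 (PS : 𝒮 → ℝ) (𝒰 : Type) [Fintype 𝒰] : 𝒮 × 𝒰 → ℝ :=
  fun su => PS su.1 / (Fintype.card 𝒰 : ℝ)

/-- The i.i.d. `n`-fold sample-space pmf on `Fin n → 𝒮 × 𝒰`. -/
def pn (PS : 𝒮 → ℝ) (𝒰 : Type) [Fintype 𝒰] (n : ℕ) :
    (Fin n → 𝒮 × 𝒰) → ℝ :=
  fun ω => ∏ i, p1 PS 𝒰 (ω i)

/-- The secret word `Sⁿ` as a random variable. -/
def SnB (𝒰 : Type) (n : ℕ) : (Fin n → 𝒮 × 𝒰) → (Fin n → 𝒮) :=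
  fun ω i => (ω i).1

/-- The first share `Xⁿ` produced by the symbolwise encoder `φₙ*`. -/
def XnB (f : 𝒮 × 𝒰 → 𝒳 × 𝒴) (n : ℕ) : (Fin n → 𝒮 × 𝒰) → (Fin n → 𝒳) :=
  fun ω i => (f (ω i)).1

/-- The second share `Yⁿ` produced by the symbolwise encoder `φₙ*`. -/
def YnB (f : 𝒮 × 𝒰 → 𝒳 × 𝒴) (n : ℕ) : (Fin n → 𝒮 × 𝒰) → (Fin n → 𝒴) :=
  fun ω i => (f (ω i)).2

open scoped Classical in
/-- The acceptance region `𝒜ₙ*`: pairs of positive probability whose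
normalized information density exceeds `ℓ − γₙ`. -/
def AccB [Fintype 𝒮] [Fintype 𝒳] [Fintype 𝒴]
    (PS : 𝒮 → ℝ) (𝒰 : Type) [Fintype 𝒰] (f : 𝒮 × 𝒰 → 𝒳 × 𝒴)
    (ℓ : ℝ) (γ : ℕ → ℝ) (n : ℕ) : Finset ((Fin n → 𝒳) × (Fin n → 𝒴)) :=
  Finset.univ.filter fun xy =>
    0 < distOf (pn PS 𝒰 n) (XnB f n) xy.1 * distOf (pn PS 𝒰 n) (YnB f n) xy.2 ∧
    ℓ - γ n < Real.logb 2
        (distOf (pn PS 𝒰 n) (fun ω => (XnB f n ω, YnB f n ω)) xy /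
          (distOf (pn PS 𝒰 n) (XnB f n) xy.1 *
            distOf (pn PS 𝒰 n) (YnB f n) xy.2)) / (n : ℝ)

open scoped Classical in
/-- The symbolwise application `gₙ` of the single-letter decoder `g`. -/
def gnB (g : 𝒳 × 𝒴 → Option 𝒮) (n : ℕ)
    (xy : (Fin n → 𝒳) × (Fin n → 𝒴)) : Option (Fin n → 𝒮) :=
  if h : ∀ i, (g (xy.1 i, xy.2 i)).isSome then
    some (fun i => (g (xy.1 i, xy.2 i)).get (h i))
  else none

open scoped Classical in
/-- The decoder `ψₙ*`: decode symbolwise inside `𝒜ₙ*`, declare `⊥` outside. -/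
def psiB [Fintype 𝒮] [Fintype 𝒳] [Fintype 𝒴]
    (PS : 𝒮 → ℝ) (𝒰 : Type) [Fintype 𝒰] (f : 𝒮 × 𝒰 → 𝒳 × 𝒴)
    (g : 𝒳 × 𝒴 → Option 𝒮) (ℓ : ℝ) (γ : ℕ → ℝ) (n : ℕ)
    (xy : (Fin n → 𝒳) × (Fin n → 𝒴)) : Option (Fin n → 𝒮) :=
  if xy ∈ AccB PS 𝒰 f ℓ γ n then gnB g n xy else none

open scoped Classical in
/-- The decoding error probability `Pₙᵉ = Pr{ψₙ*(φₙ*(Sⁿ,Uⁿ)) ≠ Sⁿ}`. -/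
def PeB [Fintype 𝒮] [Fintype 𝒳] [Fintype 𝒴]
    (PS : 𝒮 → ℝ) (𝒰 : Type) [Fintype 𝒰] (f : 𝒮 × 𝒰 → 𝒳 × 𝒴)
    (g : 𝒳 × 𝒴 → Option 𝒮) (ℓ : ℝ) (γ : ℕ → ℝ) (n : ℕ) : ℝ :=
  ∑ ω ∈ Finset.univ.filter (fun ω : Fin n → 𝒮 × 𝒰 =>
      psiB PS 𝒰 f g ℓ γ n (XnB f n ω, YnB f n ω) ≠ some (SnB 𝒰 n ω)),
    pn PS 𝒰 n ω

/-- `Pₙˣ`: maximal success probability of impersonating participant 1. -/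
def PimpXB [Fintype 𝒮] [Fintype 𝒳] [Fintype 𝒴]
    (PS : 𝒮 → ℝ) (𝒰 : Type) [Fintype 𝒰] (f : 𝒮 × 𝒰 → 𝒳 × 𝒴)
    (ℓ : ℝ) (γ : ℕ → ℝ) (n : ℕ) : ℝ :=
  ⨆ Q : {Q : (Fin n → 𝒳) → ℝ // IsPMF Q},
    ∑ xy ∈ AccB PS 𝒰 f ℓ γ n, Q.1 xy.1 * distOf (pn PS 𝒰 n) (YnB f n) xy.2

/-- `Pₙʸ`: maximal success probability of impersonating participant 2. -/
def PimpYB [Fintype 𝒮] [Fintype 𝒳] [Fintype 𝒴]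
    (PS : 𝒮 → ℝ) (𝒰 : Type) [Fintype 𝒰] (f : 𝒮 × 𝒰 → 𝒳 × 𝒴)
    (ℓ : ℝ) (γ : ℕ → ℝ) (n : ℕ) : ℝ :=
  ⨆ Q : {Q : (Fin n → 𝒴) → ℝ // IsPMF Q},
    ∑ xy ∈ AccB PS 𝒰 f ℓ γ n, distOf (pn PS 𝒰 n) (XnB f n) xy.1 * Q.1 xy.2

/-! The information density of the pair of shares is additive over the letters of a word and has
single-letter mean `I(X;Y) = ℓ`. Being a sum of i.i.d. terms, it is concentrated around `n ℓ` with
deviations of order `√n`, so the margin `n γₙ ≫ √n` makes a rejection unlikely by Chebyshev's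
inequality. Since the decoder never errs on a genuine accepted pair, this controls `Pₙᵉ`.

On the acceptance region `P_X(x) P_Y(y) ≤ 2^(-n(ℓ - γₙ)) P_XY(x, y)`; summing over `y` and dividing
by `P_X(x)` bounds the acceptance probability of every forged `x`, hence `Pₙˣ`. In the other
direction `Pₙˣ ≥ |𝒳|⁻ⁿ (1 - Pₙᵉ)`, which keeps the exponents bounded, as the `liminf` of a real
sequence requires. Exchanging the two shares turns all of this into statements about `Pₙʸ`. -/

section Distribution

variable {Ω α β : Type*} [Fintype Ω] {p : Ω → ℝ}

lemma distOf_nonneg (hp : ∀ ω, 0 ≤ p ω) (X : Ω → α) (x : α) : 0 ≤ distOf p X x :=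
  Finset.sum_nonneg fun ω _ => hp ω

lemma distOf_apply_pos (hp : ∀ ω, 0 ≤ p ω) (X : Ω → α) {ω : Ω} (hω : 0 < p ω) :
    0 < distOf p X (X ω) := by
  classical
  exact hω.trans_le <| Finset.single_le_sum (f := p) (fun ω _ => hp ω) (by simp)

lemma distOf_comp_of_injective (p : Ω → ℝ) {e : α → β} (he : Function.Injective e) (X : Ω → α)
    (x : α) : distOf p (fun ω => e (X ω)) (e x) = distOf p X x :=
  Finset.sum_congr (by ext; simp [he.eq_iff]) fun _ _ => rfl

lemma distOf_swap (p : Ω → ℝ) (X : Ω → α) (Y : Ω → β) (xy : α × β) :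
    distOf p (fun ω => (Y ω, X ω)) xy.swap = distOf p (fun ω => (X ω, Y ω)) xy :=
  distOf_comp_of_injective p Prod.swap_injective (fun ω => (X ω, Y ω)) xy

lemma sum_distOf_mul [Fintype α] (p : Ω → ℝ) (X : Ω → α) (h : α → ℝ) :
    ∑ x, distOf p X x * h x = ∑ ω, p ω * h (X ω) := by
  classical
  rw [← Finset.sum_fiberwise _ X]
  refine Finset.sum_congr rfl fun x _ => ?_
  rw [distOf, Finset.sum_mul]
  exact Finset.sum_congr (by congr) fun ω hω => by rw [(Finset.mem_filter.1 hω).2]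

lemma isPMF_distOf [Fintype α] (hp : IsPMF p) (X : Ω → α) : IsPMF (distOf p X) :=
  ⟨distOf_nonneg hp.1 X, by simpa [hp.2] using sum_distOf_mul p X fun _ => 1⟩

lemma sum_filter_mem_eq_sum_distOf [DecidableEq α] (p : Ω → ℝ) (X : Ω → α) (A : Finset α) :
    ∑ ω with X ω ∈ A, p ω = ∑ x ∈ A, distOf p X x := by
  rw [← Finset.sum_fiberwise_of_maps_to (g := X) (t := A) fun ω hω => (Finset.mem_filter.1 hω).2]
  refine Finset.sum_congr rfl fun x hx => Finset.sum_congr ?_ fun _ _ => rfl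
  ext ω
  simp +contextual [hx]

lemma sum_distOf_prodMk [Fintype β] (p : Ω → ℝ) (X : Ω → α) (Y : Ω → β) (x : α) :
    ∑ y, distOf p (fun ω => (X ω, Y ω)) (x, y) = distOf p X x := by
  classical
  simp only [distOf, Prod.mk.injEq, ← Finset.filter_filter]
  convert Finset.sum_fiberwise (Finset.univ.filter fun ω => X ω = x) Y p

lemma distOf_prodMk_le (hp : ∀ ω, 0 ≤ p ω) (X : Ω → α) (Y : Ω → β) (xy : α × β) :
    distOf p (fun ω => (X ω, Y ω)) xy ≤ distOf p Y xy.2 := by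
  refine Finset.sum_le_sum_of_subset_of_nonneg (fun ω hω => ?_) fun ω _ _ => hp ω
  simp only [Finset.mem_filter, Finset.mem_univ, true_and] at hω ⊢
  rw [← hω]

end Distribution

section ProductPMF

open MeasureTheory ProbabilityTheory

variable {Ω ι α β : Type*} [Fintype ι]

/-- The joint law of a family of i.i.d. random variables with law `p`. -/
def prodPMF (p : Ω → ℝ) (ω : ι → Ω) : ℝ := ∏ i, p (ω i)

lemma prodPMF_nonneg {p : Ω → ℝ} (hp : ∀ a, 0 ≤ p a) (ω : ι → Ω) : 0 ≤ prodPMF p ω :=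
  Finset.prod_nonneg fun i _ => hp (ω i)

lemma apply_pos_of_prodPMF_ne_zero {p : Ω → ℝ} (hp : ∀ a, 0 ≤ p a) {ω : ι → Ω}
    (hω : prodPMF p ω ≠ 0) (i : ι) : 0 < p (ω i) :=
  (hp _).lt_of_ne' (Finset.prod_ne_zero_iff.1 hω i (Finset.mem_univ i))

variable [Fintype Ω] [DecidableEq ι] {p : Ω → ℝ}

lemma isPMF_prodPMF (hp : IsPMF p) : IsPMF (prodPMF p : (ι → Ω) → ℝ) := by
  refine ⟨prodPMF_nonneg hp.1, ?_⟩
  simp only [prodPMF, ← Fintype.piFinset_univ, ← Finset.prod_univ_sum, hp.2, Finset.prod_const_one]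

lemma distOf_prodPMF (p : Ω → ℝ) (F : Ω → α) (x : ι → α) :
    distOf (prodPMF p) (fun ω i => F (ω i)) x = prodPMF (distOf p F) x := by
  classical
  simp only [prodPMF, distOf, Finset.prod_univ_sum]
  refine Finset.sum_congr ?_ fun _ _ => rfl
  ext ω
  simp [funext_iff]

lemma distOf_prodPMF_prodMk (p : Ω → ℝ) (F : Ω → α) (G : Ω → β) (x : ι → α) (y : ι → β) :
    distOf (prodPMF p) (fun ω : ι → Ω => (fun i => F (ω i), fun i => G (ω i))) (x, y) =
      prodPMF (distOf p fun ω => (F ω, G ω)) fun i => (x i, y i) := by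
  rw [← distOf_prodPMF]
  exact distOf_comp_of_injective _ (Equiv.arrowProdEquivProdArrow ι _ _).injective
    (fun (ω : ι → Ω) i => (F (ω i), G (ω i))) fun i => (x i, y i)

/-- The measure-theoretic counterpart of a real-valued probability mass function, through which
the library's results on expectations and variances under product measures become available. -/
def IsPMF.toPMF (hp : IsPMF p) : PMF Ω :=
  PMF.ofFintype (fun ω => ENNReal.ofReal (p ω)) <| by
    rw [← ENNReal.ofReal_sum_of_nonneg fun ω _ => hp.1 ω, hp.2, ENNReal.ofReal_one]

section Measure

variable [MeasurableSpace Ω] [DiscreteMeasurableSpace Ω]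

lemma IsPMF.integral_toPMF (hp : IsPMF p) (h : Ω → ℝ) :
    ∫ ω, h ω ∂hp.toPMF.toMeasure = ∑ ω, p ω * h ω := by
  simp [PMF.integral_eq_sum, IsPMF.toPMF, ENNReal.toReal_ofReal (hp.1 _)]

lemma IsPMF.measureReal_toPMF (hp : IsPMF p) (T : Finset Ω) :
    hp.toPMF.toMeasure.real T = ∑ ω ∈ T, p ω := by
  rw [← sum_measureReal_singleton]
  refine Finset.sum_congr rfl fun ω _ => ?_
  rw [measureReal_def, PMF.toMeasure_apply_singleton _ _ (measurableSet_singleton ω), IsPMF.toPMF,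
    PMF.ofFintype_apply, ENNReal.toReal_ofReal (hp.1 ω)]

lemma IsPMF.pi_toPMF (hp : IsPMF p) :
    Measure.pi (fun _ : ι => hp.toPMF.toMeasure) =
      (isPMF_prodPMF hp : IsPMF (prodPMF p : (ι → Ω) → ℝ)).toPMF.toMeasure := by
  refine Measure.ext_of_singleton fun ω => ?_
  rw [Measure.pi_singleton, PMF.toMeasure_apply_singleton _ _ (measurableSet_singleton ω)]
  simp only [PMF.toMeasure_apply_singleton _ _ (measurableSet_singleton _), IsPMF.toPMF,
    PMF.ofFintype_apply, prodPMF, ENNReal.ofReal_prod_of_nonneg fun i _ => hp.1 (ω i)]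

end Measure

lemma sum_prodPMF_mul_sum (hp : IsPMF p) (h : Ω → ℝ) :
    ∑ ω : ι → Ω, prodPMF p ω * ∑ i, h (ω i) = Fintype.card ι * ∑ a, p a * h a := by
  let _ : MeasurableSpace Ω := ⊤
  rw [← (isPMF_prodPMF hp).integral_toPMF, ← hp.pi_toPMF,
    integral_finsetSum _ fun _ _ => Integrable.of_finite]
  simp [integral_comp_eval, hp.integral_toPMF, AEStronglyMeasurable.of_discrete]

omit [DecidableEq ι] in
lemma sum_prodPMF_le_of_deviation (hp : IsPMF p) (h : Ω → ℝ) {c : ℝ} (hc : 0 < c)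
    (T : Finset (ι → Ω))
    (hT : ∀ ω ∈ T, c ≤ |∑ i, h (ω i) - Fintype.card ι * ∑ a, p a * h a|) :
    ∑ ω ∈ T, prodPMF p ω ≤
      Fintype.card ι * (∑ a, p a * (h a - ∑ b, p b * h b) ^ 2) / c ^ 2 := by
  classical
  let _ : MeasurableSpace Ω := ⊤
  set μ := Measure.pi fun _ : ι => hp.toPMF.toMeasure with hμ
  set H : (ι → Ω) → ℝ := ∑ i, fun ω => h (ω i) with hH
  have mean : ∫ ω, H ω ∂μ = Fintype.card ι * ∑ a, p a * h a := by
    rw [← sum_prodPMF_mul_sum hp, ← (isPMF_prodPMF hp).integral_toPMF, ← hp.pi_toPMF]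
    simp [hH, hμ]
  have variance : Var[H; μ] = Fintype.card ι * ∑ a, p a * (h a - ∑ b, p b * h b) ^ 2 := by
    rw [variance_sum_pi fun _ => MemLp.of_discrete]
    simp [variance_eq_integral, AEMeasurable.of_discrete, hp.integral_toPMF]
  have chebyshev : μ.real {ω | c ≤ |H ω - ∫ ω, H ω ∂μ|} ≤ Var[H; μ] / c ^ 2 :=
    ENNReal.toReal_le_of_le_ofReal (div_nonneg (variance_nonneg _ _) (sq_nonneg c))
      (meas_ge_le_variance_div_sq MemLp.of_discrete hc)
  rw [← (isPMF_prodPMF hp).measureReal_toPMF, ← hp.pi_toPMF, ← variance]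
  refine (measureReal_mono fun ω hω => ?_).trans chebyshev
  rw [Set.mem_ofPred_eq, mean, hH, Finset.sum_apply]
  exact hT ω hω

end ProductPMF

section Entropy

variable {Ω ι α β : Type*} [Fintype Ω] [Fintype ι] [Fintype α] [Fintype β] {p : Ω → ℝ}

lemma MI_eq_entRV_sub_condEnt (p : Ω → ℝ) (X : Ω → α) (Y : Ω → β) :
    MI p X Y = entRV p X - condEnt p X Y := by
  rw [MI, condEnt]
  ring

lemma ent_comp_equiv (e : α ≃ β) (q : β → ℝ) : ent (fun a => q (e a)) = ent q :=
  congrArg Neg.neg (e.sum_comp fun b => q b * Real.logb 2 (q b))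

variable [DecidableEq ι]

lemma ent_prodPMF {q : α → ℝ} (hq : IsPMF q) :
    ent (prodPMF q : (ι → α) → ℝ) = Fintype.card ι * ent q := by
  rw [ent, ent, mul_neg, ← sum_prodPMF_mul_sum hq]
  refine congrArg Neg.neg (Finset.sum_congr rfl fun x _ => ?_)
  rcases eq_or_ne (prodPMF q x) 0 with hx | hx
  · simp only [hx, zero_mul]
  · rw [prodPMF, Real.logb_prod _ _ fun i _ => (apply_pos_of_prodPMF_ne_zero hq.1 hx i).ne']

lemma entRV_prodPMF (hp : IsPMF p) (F : Ω → α) :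
    entRV (prodPMF p) (fun (ω : ι → Ω) i => F (ω i)) = Fintype.card ι * entRV p F := by
  rw [entRV, entRV, ← ent_prodPMF (isPMF_distOf hp F)]
  exact congrArg ent (funext (distOf_prodPMF p F))

lemma entRV_prodPMF_prodMk (hp : IsPMF p) (F : Ω → α) (G : Ω → β) :
    entRV (prodPMF p) (fun ω : ι → Ω => (fun i => F (ω i), fun i => G (ω i))) =
      Fintype.card ι * entRV p fun ω => (F ω, G ω) := by
  rw [entRV, entRV, ← ent_prodPMF (isPMF_distOf hp fun ω => (F ω, G ω)),
    ← ent_comp_equiv (Equiv.arrowProdEquivProdArrow ι (fun _ => α) fun _ => β)]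
  exact congrArg ent (funext fun z => distOf_prodPMF_prodMk p F G _ _)

lemma condEnt_prodPMF (hp : IsPMF p) (F : Ω → α) (G : Ω → β) :
    condEnt (prodPMF p) (fun (ω : ι → Ω) i => F (ω i)) (fun ω i => G (ω i)) =
      Fintype.card ι * condEnt p F G := by
  rw [condEnt, condEnt, entRV_prodPMF hp, entRV_prodPMF_prodMk hp, mul_sub]

lemma MI_prodPMF (hp : IsPMF p) (F : Ω → α) (G : Ω → β) :
    MI (prodPMF p) (fun (ω : ι → Ω) i => F (ω i)) (fun ω i => G (ω i)) =
      Fintype.card ι * MI p F G := by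
  simp only [MI_eq_entRV_sub_condEnt, entRV_prodPMF hp, condEnt_prodPMF hp, mul_sub]

lemma condEnt_prodPMF_eq_entRV (hp : IsPMF p) {F : Ω → α} {G : Ω → β}
    (h : condEnt p F G = entRV p F) :
    condEnt (prodPMF p) (fun (ω : ι → Ω) i => F (ω i)) (fun ω i => G (ω i)) =
      entRV (prodPMF p) fun (ω : ι → Ω) i => F (ω i) := by
  rw [condEnt_prodPMF hp, entRV_prodPMF hp, h]

end Entropy

section InfoDensity

variable {Ω ι α β : Type*} [Fintype Ω] [Fintype ι] {p : Ω → ℝ}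

/-- The information density `log₂ (P_XY(x, y) / (P_X(x) P_Y(y)))`. By the conventions for division
by zero and for `Real.logb`, it is `0` at pairs where the quotient is `0` or undefined. -/
def infoDensity (p : Ω → ℝ) (X : Ω → α) (Y : Ω → β) (xy : α × β) : ℝ :=
  Real.logb 2 (distOf p (fun ω => (X ω, Y ω)) xy / (distOf p X xy.1 * distOf p Y xy.2))

lemma infoDensity_swap (p : Ω → ℝ) (X : Ω → α) (Y : Ω → β) (xy : α × β) :
    infoDensity p Y X xy.swap = infoDensity p X Y xy := by
  rw [infoDensity, distOf_swap, Prod.fst_swap, Prod.snd_swap, mul_comm, infoDensity]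

lemma sum_mul_infoDensity [Fintype α] [Fintype β] (hp : ∀ ω, 0 ≤ p ω) (X : Ω → α) (Y : Ω → β) :
    ∑ ω, p ω * infoDensity p X Y (X ω, Y ω) = MI p X Y := by
  simp only [MI, entRV, ent, sum_distOf_mul p _ fun x => Real.logb 2 (distOf p _ x)]
  rw [← Finset.sum_neg_distrib, ← Finset.sum_neg_distrib, ← Finset.sum_add_distrib,
    sub_neg_eq_add, ← Finset.sum_add_distrib]
  refine Finset.sum_congr rfl fun ω _ => ?_
  rcases (hp ω).eq_or_lt with hω | hω
  · simp only [← hω, zero_mul, neg_zero, add_zero]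
  · have hX := (distOf_apply_pos hp X hω).ne'
    have hY := (distOf_apply_pos hp Y hω).ne'
    have hXY := (distOf_apply_pos hp (fun ω => (X ω, Y ω)) hω).ne'
    rw [infoDensity, Real.logb_div hXY (mul_ne_zero hX hY), Real.logb_mul hX hY]
    ring

lemma infoDensity_prodPMF [DecidableEq ι] (hp : ∀ ω, 0 ≤ p ω) (F : Ω → α) (G : Ω → β) {ω : ι → Ω}
    (hω : prodPMF p ω ≠ 0) :
    infoDensity (prodPMF p) (fun ω i => F (ω i)) (fun ω i => G (ω i))
        (fun i => F (ω i), fun i => G (ω i)) = ∑ i, infoDensity p F G (F (ω i), G (ω i)) := by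
  simp only [infoDensity]
  rw [distOf_prodPMF_prodMk, distOf_prodPMF, distOf_prodPMF, prodPMF, prodPMF, prodPMF,
    ← Finset.prod_mul_distrib, ← Finset.prod_div_distrib, Real.logb_prod]
  intro i _
  have hi := apply_pos_of_prodPMF_ne_zero hp hω i
  exact (div_pos (distOf_apply_pos hp (fun ω => (F ω, G ω)) hi)
    (mul_pos (distOf_apply_pos hp F hi) (distOf_apply_pos hp G hi))).ne'

lemma mul_distOf_le_of_lt_infoDensity (hp : ∀ ω, 0 ≤ p ω) {X : Ω → α} {Y : Ω → β} {xy : α × β}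
    {t : ℝ} (ht : 0 ≤ t) (h : t < infoDensity p X Y xy) :
    0 < distOf p X xy.1 ∧
      distOf p X xy.1 * distOf p Y xy.2 ≤ 2 ^ (-t) * distOf p (fun ω => (X ω, Y ω)) xy := by
  have hX := distOf_nonneg hp X xy.1
  have hXY := mul_nonneg hX (distOf_nonneg hp Y xy.2)
  have hJ := distOf_nonneg hp (fun ω => (X ω, Y ω)) xy
  -- A positive density excludes the junk values, where the logarithm is `0`.
  have hratio : distOf p (fun ω => (X ω, Y ω)) xy / (distOf p X xy.1 * distOf p Y xy.2) ≠ 0 := by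
    intro h0
    rw [infoDensity, h0, Real.logb_zero] at h
    exact ht.not_gt h
  have hprod := (div_ne_zero_iff.1 hratio).2
  refine ⟨hX.lt_of_ne' (left_ne_zero_of_mul hprod), ?_⟩
  have hlt := (Real.lt_logb_iff_rpow_lt one_lt_two ((div_nonneg hJ hXY).lt_of_ne' hratio)).1 h
  rw [lt_div_iff₀ (hXY.lt_of_ne' hprod)] at hlt
  rw [Real.rpow_neg zero_le_two, inv_mul_eq_div, le_div_iff₀ (by positivity), mul_comm]
  exact hlt.le

end InfoDensity

section Sections

variable {Ω α β : Type*} [Fintype β] [DecidableEq α] [DecidableEq β] {A : Finset (α × β)}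

lemma sum_mem_eq_sum_sections [Fintype α] (A : Finset (α × β)) (k : α → β → ℝ) :
    ∑ xy ∈ A, k xy.1 xy.2 = ∑ x, ∑ y with (x, y) ∈ A, k x y := by
  simp only [Finset.sum_filter]
  rw [← Fintype.sum_prod_type' (f := fun x y => if (x, y) ∈ A then k x y else 0)]
  simp

lemma sum_section_le_sum {w : β → ℝ} (hw : ∀ y, 0 ≤ w y) (A : Finset (α × β)) (x : α) :
    ∑ y with (x, y) ∈ A, w y ≤ ∑ y, w y :=
  Finset.sum_le_sum_of_subset_of_nonneg (Finset.filter_subset _ _) fun y _ _ => hw y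

lemma sum_section_le_of_mul_le [Fintype Ω] {p : Ω → ℝ} {X : Ω → α} {Y : Ω → β}
    (hp : ∀ ω, 0 ≤ p ω) {c : ℝ} (hc : 0 ≤ c)
    (hA : ∀ xy ∈ A, 0 < distOf p X xy.1 ∧
      distOf p X xy.1 * distOf p Y xy.2 ≤ c * distOf p (fun ω => (X ω, Y ω)) xy) (x : α) :
    ∑ y with (x, y) ∈ A, distOf p Y y ≤ c := by
  rcases Finset.eq_empty_or_nonempty (Finset.univ.filter fun y => (x, y) ∈ A) with h | ⟨y₀, hy₀⟩
  · rwa [h, Finset.sum_empty]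
  refine le_of_mul_le_mul_left ?_ (hA _ (Finset.mem_filter.1 hy₀).2).1
  calc distOf p X x * ∑ y with (x, y) ∈ A, distOf p Y y
      ≤ ∑ y with (x, y) ∈ A, c * distOf p (fun ω => (X ω, Y ω)) (x, y) := by
        rw [Finset.mul_sum]
        exact Finset.sum_le_sum fun y hy => (hA _ (Finset.mem_filter.1 hy).2).2
    _ ≤ ∑ y, c * distOf p (fun ω => (X ω, Y ω)) (x, y) :=
        Finset.sum_le_sum_of_subset_of_nonneg (Finset.filter_subset _ _) fun y _ _ =>
          mul_nonneg hc (distOf_nonneg hp _ _)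
    _ = distOf p X x * c := by rw [← Finset.mul_sum, sum_distOf_prodMk, mul_comm]

lemma sum_mul_le_of_sections_le [Fintype α] {w : β → ℝ} {c : ℝ}
    (h : ∀ x, ∑ y with (x, y) ∈ A, w y ≤ c) {Q : α → ℝ} (hQ : IsPMF Q) :
    ∑ xy ∈ A, Q xy.1 * w xy.2 ≤ c := by
  calc ∑ xy ∈ A, Q xy.1 * w xy.2
      = ∑ x, Q x * ∑ y with (x, y) ∈ A, w y := by
        simp only [sum_mem_eq_sum_sections A fun x y => Q x * w y, Finset.mul_sum]
    _ ≤ ∑ x, Q x * c :=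
        Finset.sum_le_sum fun x _ => mul_le_mul_of_nonneg_left (h x) (hQ.1 x)
    _ = c := by rw [← Finset.sum_mul, hQ.2, one_mul]

end Sections

section Impersonation

variable {Ω α β : Type*} [Fintype α]

/-- The largest probability of hitting the acceptance region `A` with a forged first share, when
the second share is genuine with law `w`. The forgery may be randomized, with any law `Q`. -/
def impersonationProb (A : Finset (α × β)) (w : β → ℝ) : ℝ :=
  ⨆ Q : {Q : α → ℝ // IsPMF Q}, ∑ xy ∈ A, Q.1 xy.1 * w xy.2

section

variable [Fintype β] [DecidableEq α] [DecidableEq β] {w : β → ℝ}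

lemma impersonationProb_le {A : Finset (α × β)} {c : ℝ} (hc : 0 ≤ c)
    (h : ∀ x, ∑ y with (x, y) ∈ A, w y ≤ c) : impersonationProb A w ≤ c :=
  Real.iSup_le (fun Q => sum_mul_le_of_sections_le h Q.2) hc

lemma sum_section_le_impersonationProb (hw : ∀ y, 0 ≤ w y) (A : Finset (α × β)) (x : α) :
    ∑ y with (x, y) ∈ A, w y ≤ impersonationProb A w := by
  have hQ : IsPMF (Pi.single x 1 : α → ℝ) :=
    ⟨(Pi.single_nonneg.2 zero_le_one : (0 : α → ℝ) ≤ Pi.single x 1), by simp⟩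
  have hbdd : BddAbove (Set.range fun Q : {Q : α → ℝ // IsPMF Q} =>
      ∑ xy ∈ A, Q.1 xy.1 * w xy.2) :=
    ⟨∑ y, w y, Set.forall_mem_range.2 fun Q =>
      sum_mul_le_of_sections_le (sum_section_le_sum hw A) Q.2⟩
  calc ∑ y with (x, y) ∈ A, w y
      = ∑ a, (Pi.single x 1 : α → ℝ) a * ∑ y with (a, y) ∈ A, w y := by
        simp [Pi.single_apply]
    _ = ∑ xy ∈ A, (Pi.single x 1 : α → ℝ) xy.1 * w xy.2 := by
        simp only [sum_mem_eq_sum_sections A fun a y => (Pi.single x 1 : α → ℝ) a * w y,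
          Finset.mul_sum]
    _ ≤ impersonationProb A w := le_ciSup hbdd ⟨Pi.single x 1, hQ⟩

end

variable [Fintype Ω] [Finite β] {p : Ω → ℝ}

lemma impersonationProb_le_two_rpow (hp : IsPMF p) {X : Ω → α} {Y : Ω → β}
    {A : Finset (α × β)} {t : ℝ} (hA : ∀ xy ∈ A, t < infoDensity p X Y xy) :
    impersonationProb A (distOf p Y) ≤ 2 ^ (-t) := by
  classical
  have := Fintype.ofFinite β
  refine impersonationProb_le (by positivity) ?_
  rcases le_or_gt 0 t with ht | ht
  · exact sum_section_le_of_mul_le hp.1 (by positivity) fun xy hxy =>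
      mul_distOf_le_of_lt_infoDensity hp.1 ht (hA xy hxy)
  · intro x
    have hY := isPMF_distOf hp Y
    calc ∑ y with (x, y) ∈ A, distOf p Y y ≤ ∑ y, distOf p Y y := sum_section_le_sum hY.1 A x
      _ = 1 := hY.2
      _ ≤ 2 ^ (-t) := Real.one_le_rpow one_le_two (neg_nonneg.2 ht.le)

lemma sum_filter_mem_le_card_mul_impersonationProb [DecidableEq α] [DecidableEq β]
    (hp : ∀ ω, 0 ≤ p ω) (X : Ω → α) (Y : Ω → β) (A : Finset (α × β)) :
    ∑ ω with (X ω, Y ω) ∈ A, p ω ≤ Fintype.card α * impersonationProb A (distOf p Y) := by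
  have := Fintype.ofFinite β
  calc ∑ ω with (X ω, Y ω) ∈ A, p ω
      = ∑ xy ∈ A, distOf p (fun ω => (X ω, Y ω)) xy := sum_filter_mem_eq_sum_distOf p _ A
    _ ≤ ∑ xy ∈ A, distOf p Y xy.2 := Finset.sum_le_sum fun xy _ => distOf_prodMk_le hp X Y xy
    _ = ∑ x, ∑ y with (x, y) ∈ A, distOf p Y y :=
        sum_mem_eq_sum_sections A fun _ y => distOf p Y y
    _ ≤ ∑ _x : α, impersonationProb A (distOf p Y) :=
        Finset.sum_le_sum fun x _ => sum_section_le_impersonationProb (distOf_nonneg hp Y) A x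
    _ = Fintype.card α * impersonationProb A (distOf p Y) := by
        rw [Finset.sum_const, Finset.card_univ, nsmul_eq_mul]

end Impersonation

section Exponent

lemma neg_logb_div_mem_Icc {P K r : ℝ} {n : ℕ} (hn : n ≠ 0) (hK : 0 ≤ K)
    (hlower : 1 / 2 ≤ K ^ n * P) (hupper : P ≤ 2 ^ (-(n * r))) :
    -Real.logb 2 P / n ∈ Set.Icc r (1 + Real.logb 2 K) := by
  have hn1 : (1 : ℝ) ≤ n := Nat.one_le_cast.2 (Nat.one_le_iff_ne_zero.2 hn)
  have hpos : 0 < K ^ n * P := one_half_pos.trans_le hlower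
  have hP : 0 < P := pos_of_mul_pos_right hpos (pow_nonneg hK n)
  have hlog_upper : Real.logb 2 P ≤ -(n * r) := by
    rwa [Real.logb_le_iff_le_rpow one_lt_two hP]
  have hlog_lower : -1 ≤ n * Real.logb 2 K + Real.logb 2 P := by
    rw [← Real.logb_pow, ← Real.logb_mul (left_ne_zero_of_mul hpos.ne') hP.ne',
      Real.le_logb_iff_rpow_le one_lt_two hpos, Real.rpow_neg_one, ← one_div]
    exact hlower
  rw [Set.mem_Icc, le_div_iff₀ (by positivity), div_le_iff₀ (by positivity)]
  constructor <;> linarith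

lemma le_liminf_min_of_mem_Icc {ι : Type*} {F : Filter ι} [F.NeBot] {u v r : ι → ℝ} {ℓ b : ℝ}
    (hr : Tendsto r F (nhds ℓ)) (hu : ∀ᶠ i in F, u i ∈ Set.Icc (r i) b)
    (hv : ∀ᶠ i in F, r i ≤ v i) : ℓ ≤ liminf (fun i => min (u i) (v i)) F := by
  have hle : ∀ᶠ i in F, r i ≤ min (u i) (v i) := by
    filter_upwards [hu, hv] with i hui hvi using le_min hui.1 hvi
  have hcobdd : IsCoboundedUnder (· ≥ ·) F fun i => min (u i) (v i) :=
    (isBoundedUnder_of_eventually_le (a := b) <| by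
      filter_upwards [hu] with i hi using (min_le_left _ _).trans hi.2).isCoboundedUnder_ge
  exact hr.liminf_eq.symm.trans_le (liminf_le_liminf hle hr.isBoundedUnder_ge hcobdd)

end Exponent

section Symbolwise

variable {𝒰 : Type} [Fintype 𝒰] {PS : 𝒮 → ℝ} {f : 𝒮 × 𝒰 → 𝒳 × 𝒴} {ℓ : ℝ} {γ : ℕ → ℝ} {n : ℕ}

lemma p1_nonneg (hPS : ∀ s, 0 ≤ PS s) (su : 𝒮 × 𝒰) : 0 ≤ p1 PS 𝒰 su :=
  div_nonneg (hPS _) (Nat.cast_nonneg _)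

lemma gnB_eq_some {g : 𝒳 × 𝒴 → Option 𝒮} {xy : (Fin n → 𝒳) × (Fin n → 𝒴)} {s : Fin n → 𝒮}
    (h : ∀ i, g (xy.1 i, xy.2 i) = some (s i)) : gnB g n xy = some s := by
  simp [gnB, h]

variable [Fintype 𝒮]

lemma distOf_p1_fst [Nonempty 𝒰] (PS : 𝒮 → ℝ) : distOf (p1 PS 𝒰) (fun su => su.1) = PS := by
  classical
  funext s
  have hcard : (Fintype.card 𝒰 : ℝ) ≠ 0 := Nat.cast_ne_zero.2 Fintype.card_ne_zero
  simp [distOf, Finset.sum_filter, Fintype.sum_prod_type, p1, mul_div_cancel₀ _ hcard]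

lemma isPMF_p1 [Nonempty 𝒰] (hPS : IsPMF PS) : IsPMF (p1 PS 𝒰) := by
  refine ⟨p1_nonneg hPS.1, ?_⟩
  have hsum := sum_distOf_mul (p1 PS 𝒰) (fun su => su.1) fun _ => 1
  simpa only [distOf_p1_fst, mul_one, hPS.2] using hsum.symm

lemma isPMF_pn [Nonempty 𝒰] (hPS : IsPMF PS) (n : ℕ) : IsPMF (pn PS 𝒰 n) :=
  isPMF_prodPMF (isPMF_p1 hPS)

variable [Fintype 𝒳] [Fintype 𝒴]

/-- The information density of the two shares of a single letter, as a random variable on the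
single-letter sample space. -/
def letterDensity (PS : 𝒮 → ℝ) (f : 𝒮 × 𝒰 → 𝒳 × 𝒴) (su : 𝒮 × 𝒰) : ℝ :=
  infoDensity (p1 PS 𝒰) (fun su => (f su).1) (fun su => (f su).2) (f su)

open scoped Classical in
/-- The probability `Pr{(Xⁿ, Yⁿ) ∉ 𝒜ₙ*}` that a pair of genuine shares is rejected. -/
def rejectionProb (PS : 𝒮 → ℝ) (𝒰 : Type) [Fintype 𝒰] (f : 𝒮 × 𝒰 → 𝒳 × 𝒴) (ℓ : ℝ) (γ : ℕ → ℝ)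
    (n : ℕ) : ℝ :=
  ∑ ω with (XnB f n ω, YnB f n ω) ∉ AccB PS 𝒰 f ℓ γ n, pn PS 𝒰 n ω

lemma PeB_eq_rejectionProb (hPS : ∀ s, 0 ≤ PS s) {g : 𝒳 × 𝒴 → Option 𝒮}
    (hg : ∀ s u, 0 < PS s → g (f (s, u)) = some s) (ℓ : ℝ) (γ : ℕ → ℝ) (n : ℕ) :
    PeB PS 𝒰 f g ℓ γ n = rejectionProb PS 𝒰 f ℓ γ n := by
  classical
  simp only [PeB, rejectionProb, Finset.sum_filter]
  refine Finset.sum_congr rfl fun ω _ => ?_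
  rcases eq_or_ne (pn PS 𝒰 n ω) 0 with hω | hω
  · simp only [hω, ite_self]
  have hdec : gnB g n (XnB f n ω, YnB f n ω) = some (SnB 𝒰 n ω) := gnB_eq_some fun i =>
    hg _ _ <| (hPS _).lt_of_ne' (div_ne_zero_iff.1
      (apply_pos_of_prodPMF_ne_zero (p1_nonneg hPS) hω i).ne').1
  by_cases hA : (XnB f n ω, YnB f n ω) ∈ AccB PS 𝒰 f ℓ γ n <;> simp [psiB, hA, hdec]

lemma mem_AccB {xy : (Fin n → 𝒳) × (Fin n → 𝒴)} :
    xy ∈ AccB PS 𝒰 f ℓ γ n ↔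
      0 < distOf (pn PS 𝒰 n) (XnB f n) xy.1 * distOf (pn PS 𝒰 n) (YnB f n) xy.2 ∧
        ℓ - γ n < infoDensity (pn PS 𝒰 n) (XnB f n) (YnB f n) xy / n := by
  simp only [AccB, Finset.mem_filter, Finset.mem_univ, true_and, infoDensity]

lemma lt_infoDensity_of_mem_AccB (hn : n ≠ 0) {xy : (Fin n → 𝒳) × (Fin n → 𝒴)}
    (h : xy ∈ AccB PS 𝒰 f ℓ γ n) :
    n * (ℓ - γ n) < infoDensity (pn PS 𝒰 n) (XnB f n) (YnB f n) xy := by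
  rw [← lt_div_iff₀' (by positivity)]
  exact (mem_AccB.1 h).2

lemma mem_AccB_of_lt_sum_letterDensity (hPS : ∀ s, 0 ≤ PS s) (hn : n ≠ 0) {ω : Fin n → 𝒮 × 𝒰}
    (hω : pn PS 𝒰 n ω ≠ 0) (h : n * (ℓ - γ n) < ∑ i, letterDensity PS f (ω i)) :
    (XnB f n ω, YnB f n ω) ∈ AccB PS 𝒰 f ℓ γ n := by
  have hp : ∀ ω, 0 ≤ pn PS 𝒰 n ω := prodPMF_nonneg (p1_nonneg hPS)
  have hpos : 0 < pn PS 𝒰 n ω := (hp ω).lt_of_ne' hω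
  have hdens : infoDensity (pn PS 𝒰 n) (XnB f n) (YnB f n) (XnB f n ω, YnB f n ω) =
      ∑ i, letterDensity PS f (ω i) :=
    infoDensity_prodPMF (p1_nonneg hPS) (fun su => (f su).1) (fun su => (f su).2) hω
  rw [mem_AccB, hdens, lt_div_iff₀' (by positivity)]
  exact ⟨mul_pos (distOf_apply_pos hp _ hpos) (distOf_apply_pos hp _ hpos), h⟩

lemma rejectionProb_le [Nonempty 𝒰] (hPS : IsPMF PS)
    (hMI : MI (p1 PS 𝒰) (fun su => (f su).1) (fun su => (f su).2) = ℓ)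
    (hγ : 0 < √n * γ n) :
    rejectionProb PS 𝒰 f ℓ γ n ≤
      (∑ su, p1 PS 𝒰 su * (letterDensity PS f su - ℓ) ^ 2) / (√n * γ n) ^ 2 := by
  classical
  have hn : n ≠ 0 := by
    rintro rfl
    simp at hγ
  have hγn : 0 < γ n := pos_of_mul_pos_right hγ (Real.sqrt_nonneg _)
  have hmean : ∑ su, p1 PS 𝒰 su * letterDensity PS f su = ℓ :=
    (sum_mul_infoDensity (p1_nonneg hPS.1) _ _).trans hMI
  have hdev : ∀ ω ∈ Finset.univ.filter fun ω =>
      (XnB f n ω, YnB f n ω) ∉ AccB PS 𝒰 f ℓ γ n ∧ pn PS 𝒰 n ω ≠ 0,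
      n * γ n ≤ |∑ i, letterDensity PS f (ω i) -
        Fintype.card (Fin n) * ∑ su, p1 PS 𝒰 su * letterDensity PS f su| := by
    intro ω hω
    obtain ⟨hrej, hpos⟩ := (Finset.mem_filter.1 hω).2
    have hle := not_lt.1 (mt (mem_AccB_of_lt_sum_letterDensity hPS.1 hn hpos) hrej)
    rw [hmean, Fintype.card_fin]
    exact le_abs.2 (Or.inr (by linarith))
  calc rejectionProb PS 𝒰 f ℓ γ n
      = ∑ ω with (XnB f n ω, YnB f n ω) ∉ AccB PS 𝒰 f ℓ γ n ∧ pn PS 𝒰 n ω ≠ 0, pn PS 𝒰 n ω := by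
        rw [rejectionProb, ← Finset.sum_filter_ne_zero, Finset.filter_filter]
    _ ≤ n * (∑ su, p1 PS 𝒰 su * (letterDensity PS f su - ℓ) ^ 2) / (n * γ n) ^ 2 :=
        (sum_prodPMF_le_of_deviation (isPMF_p1 hPS) (letterDensity PS f) (by positivity) _
          hdev).trans_eq (by rw [hmean, Fintype.card_fin])
    _ = (∑ su, p1 PS 𝒰 su * (letterDensity PS f su - ℓ) ^ 2) / (√n * γ n) ^ 2 := by
        rw [mul_pow, mul_pow, Real.sq_sqrt (Nat.cast_nonneg n), sq (n : ℝ), mul_assoc,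
          mul_div_mul_left _ _ (Nat.cast_ne_zero.2 hn)]

lemma tendsto_rejectionProb [Nonempty 𝒰] (hPS : IsPMF PS)
    (hMI : MI (p1 PS 𝒰) (fun su => (f su).1) (fun su => (f su).2) = ℓ)
    (hγ : Tendsto (fun n : ℕ => √n * γ n) atTop atTop) :
    Tendsto (rejectionProb PS 𝒰 f ℓ γ) atTop (nhds 0) := by
  have hbound : Tendsto (fun n : ℕ =>
      (∑ su, p1 PS 𝒰 su * (letterDensity PS f su - ℓ) ^ 2) / (√n * γ n) ^ 2) atTop (nhds 0) :=
    tendsto_const_nhds.div_atTop ((tendsto_pow_atTop two_ne_zero).comp hγ)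
  refine tendsto_of_tendsto_of_tendsto_of_le_of_le' tendsto_const_nhds hbound
    (Eventually.of_forall fun n => Finset.sum_nonneg fun ω _ => (isPMF_pn hPS n).1 ω) ?_
  filter_upwards [hγ.eventually_gt_atTop 0] with n hn using rejectionProb_le hPS hMI hn

lemma PimpXB_le_two_rpow [Nonempty 𝒰] (hPS : IsPMF PS) (hn : n ≠ 0) :
    PimpXB PS 𝒰 f ℓ γ n ≤ 2 ^ (-(n * (ℓ - γ n))) :=
  impersonationProb_le_two_rpow (isPMF_pn hPS n) fun _ => lt_infoDensity_of_mem_AccB hn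

lemma one_sub_rejectionProb_le [Nonempty 𝒰] (hPS : IsPMF PS) (f : 𝒮 × 𝒰 → 𝒳 × 𝒴) (ℓ : ℝ)
    (γ : ℕ → ℝ) (n : ℕ) :
    1 - rejectionProb PS 𝒰 f ℓ γ n ≤ Fintype.card 𝒳 ^ n * PimpXB PS 𝒰 f ℓ γ n := by
  classical
  have hsplit := Finset.sum_filter_add_sum_filter_not Finset.univ
    (fun ω => (XnB f n ω, YnB f n ω) ∈ AccB PS 𝒰 f ℓ γ n) (pn PS 𝒰 n)
  rw [(isPMF_pn hPS n).2] at hsplit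
  calc 1 - rejectionProb PS 𝒰 f ℓ γ n
      = ∑ ω with (XnB f n ω, YnB f n ω) ∈ AccB PS 𝒰 f ℓ γ n, pn PS 𝒰 n ω :=
        sub_eq_of_eq_add (by rw [← hsplit, rejectionProb])
    _ ≤ Fintype.card (Fin n → 𝒳) * PimpXB PS 𝒰 f ℓ γ n :=
        sum_filter_mem_le_card_mul_impersonationProb (isPMF_pn hPS n).1 _ _ _
    _ = Fintype.card 𝒳 ^ n * PimpXB PS 𝒰 f ℓ γ n := by
        rw [Fintype.card_pi_const, Nat.cast_pow]

lemma mem_AccB_swap {xy : (Fin n → 𝒳) × (Fin n → 𝒴)} :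
    xy.swap ∈ AccB PS 𝒰 (fun su => (f su).swap) ℓ γ n ↔ xy ∈ AccB PS 𝒰 f ℓ γ n := by
  rw [mem_AccB, mem_AccB, ← infoDensity_swap (pn PS 𝒰 n) (XnB f n), mul_comm]
  rfl

lemma rejectionProb_swap (PS : 𝒮 → ℝ) (f : 𝒮 × 𝒰 → 𝒳 × 𝒴) (ℓ : ℝ) (γ : ℕ → ℝ) (n : ℕ) :
    rejectionProb PS 𝒰 (fun su => (f su).swap) ℓ γ n = rejectionProb PS 𝒰 f ℓ γ n := by
  refine Finset.sum_congr (Finset.ext fun ω => ?_) fun _ _ => rfl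
  simp only [Finset.mem_filter, Finset.mem_univ, true_and]
  exact not_congr (mem_AccB_swap (xy := (XnB f n ω, YnB f n ω)))

lemma PimpYB_eq_PimpXB_swap (PS : 𝒮 → ℝ) (f : 𝒮 × 𝒰 → 𝒳 × 𝒴) (ℓ : ℝ) (γ : ℕ → ℝ) (n : ℕ) :
    PimpYB PS 𝒰 f ℓ γ n = PimpXB PS 𝒰 (fun su => (f su).swap) ℓ γ n :=
  iSup_congr fun _ => Finset.sum_equiv (Equiv.prodComm _ _) (fun _ => mem_AccB_swap.symm)
    fun _ _ => mul_comm _ _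

lemma eventually_exponent_PimpXB_mem_Icc [Nonempty 𝒰] (hPS : IsPMF PS)
    (hrej : Tendsto (rejectionProb PS 𝒰 f ℓ γ) atTop (nhds 0)) :
    ∀ᶠ n in atTop, -Real.logb 2 (PimpXB PS 𝒰 f ℓ γ n) / n ∈
      Set.Icc (ℓ - γ n) (1 + Real.logb 2 (Fintype.card 𝒳)) := by
  filter_upwards [eventually_ne_atTop 0, hrej.eventually_lt_const one_half_pos] with n hn hlt
  have hlower := one_sub_rejectionProb_le hPS f ℓ γ n
  exact neg_logb_div_mem_Icc hn (Nat.cast_nonneg _) (by linarith) (PimpXB_le_two_rpow hPS hn)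

lemma le_liminf_exponent [Nonempty 𝒰] (hPS : IsPMF PS) (hγ : Tendsto γ atTop (nhds 0))
    (hrej : Tendsto (rejectionProb PS 𝒰 f ℓ γ) atTop (nhds 0)) :
    ℓ ≤ liminf (fun n => min (-Real.logb 2 (PimpXB PS 𝒰 f ℓ γ n) / n)
      (-Real.logb 2 (PimpYB PS 𝒰 f ℓ γ n) / n)) atTop := by
  have hr : Tendsto (fun n => ℓ - γ n) atTop (nhds ℓ) := by
    simpa using hγ.const_sub ℓ
  refine le_liminf_min_of_mem_Icc hr (eventually_exponent_PimpXB_mem_Icc hPS hrej) ?_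
  have hrej_swap : Tendsto (rejectionProb PS 𝒰 (fun su => (f su).swap) ℓ γ) atTop (nhds 0) :=
    hrej.congr fun n => (rejectionProb_swap PS f ℓ γ n).symm
  filter_upwards [eventually_exponent_PimpXB_mem_Icc hPS hrej_swap] with n hn
  rw [PimpYB_eq_PimpXB_swap]
  exact hn.1

end Symbolwise


open scoped Classical in
/-- under the symbolwise construction, for all `n ≥ 1` the
decoding error probability equals `Pr{(Xⁿ,Yⁿ) ∉ 𝒜ₙ*}`, perfect secrecy
`H(Sⁿ|Xⁿ) = H(Sⁿ|Yⁿ) = H(Sⁿ) = n·H(S)` holds, and `I(Xⁿ;Yⁿ) = n·ℓ`;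
moreover `Pₙᵉ → 0` and the liminf of the impersonation exponents is at least
`ℓ`, so `{(φₙ*,ψₙ*)}` asymptotically realizes a (2,2)-threshold scheme with
correlation level `ℓ`. -/
theorem statement15 {𝒮 𝒳 𝒴 : Type} [Fintype 𝒮] [Fintype 𝒳] [Fintype 𝒴]
    (𝒰 : Type) [Fintype 𝒰] [Nonempty 𝒰]
    (PS : 𝒮 → ℝ) (hPS : IsPMF PS) (ℓ : ℝ) (hℓ : 0 ≤ ℓ)
    (f : 𝒮 × 𝒰 → 𝒳 × 𝒴) (g : 𝒳 × 𝒴 → Option 𝒮)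
    (hHX : condEnt (p1 PS 𝒰) (fun su => su.1) (fun su => (f su).1)
      = entRV (p1 PS 𝒰) (fun su => su.1))
    (hHY : condEnt (p1 PS 𝒰) (fun su => su.1) (fun su => (f su).2)
      = entRV (p1 PS 𝒰) (fun su => su.1))
    (hHXY : condEnt (p1 PS 𝒰) (fun su => su.1) f = 0)
    (hMI : MI (p1 PS 𝒰) (fun su => (f su).1) (fun su => (f su).2) = ℓ)
    (hg : ∀ s u, 0 < PS s → g (f (s, u)) = some s)
    (hg' : ∀ xy, (∀ su, f su ≠ xy) → g xy = none)
    (γ : ℕ → ℝ) (hγ : ∀ n, 0 < γ n) (hγ0 : Tendsto γ atTop (nhds 0))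
    (hγtop : Tendsto (fun n : ℕ => Real.sqrt (n : ℝ) * γ n) atTop atTop) :
    (∀ n, 1 ≤ n →
      PeB PS 𝒰 f g ℓ γ n =
        ∑ ω ∈ Finset.univ.filter (fun ω : Fin n → 𝒮 × 𝒰 =>
          (XnB f n ω, YnB f n ω) ∉ AccB PS 𝒰 f ℓ γ n), pn PS 𝒰 n ω ∧
      condEnt (pn PS 𝒰 n) (SnB 𝒰 n) (XnB f n) = entRV (pn PS 𝒰 n) (SnB 𝒰 n) ∧
      condEnt (pn PS 𝒰 n) (SnB 𝒰 n) (YnB f n) = entRV (pn PS 𝒰 n) (SnB 𝒰 n) ∧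
      entRV (pn PS 𝒰 n) (SnB 𝒰 n) = (n : ℝ) * ent PS ∧
      MI (pn PS 𝒰 n) (XnB f n) (YnB f n) = (n : ℝ) * ℓ) ∧
    Tendsto (fun n => PeB PS 𝒰 f g ℓ γ n) atTop (nhds 0) ∧
    ℓ ≤ liminf (fun n => min (-Real.logb 2 (PimpXB PS 𝒰 f ℓ γ n) / (n : ℝ))
        (-Real.logb 2 (PimpYB PS 𝒰 f ℓ γ n) / (n : ℝ))) atTop ∧
    Tendsto (fun n => MI (pn PS 𝒰 n) (SnB 𝒰 n) (XnB f n) / (n : ℝ)) atTop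
      (nhds 0) ∧
    Tendsto (fun n => MI (pn PS 𝒰 n) (SnB 𝒰 n) (YnB f n) / (n : ℝ)) atTop
      (nhds 0) ∧
    Tendsto (fun n => MI (pn PS 𝒰 n) (XnB f n) (YnB f n) / (n : ℝ)) atTop
      (nhds ℓ) := by
  have hp := isPMF_p1 (𝒰 := 𝒰) hPS
  have hsecX (n : ℕ) :
      condEnt (pn PS 𝒰 n) (SnB 𝒰 n) (XnB f n) = entRV (pn PS 𝒰 n) (SnB 𝒰 n) :=
    (condEnt_prodPMF_eq_entRV (ι := Fin n) hp hHX :)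
  have hsecY (n : ℕ) :
      condEnt (pn PS 𝒰 n) (SnB 𝒰 n) (YnB f n) = entRV (pn PS 𝒰 n) (SnB 𝒰 n) :=
    (condEnt_prodPMF_eq_entRV (ι := Fin n) hp hHY :)
  have hentS (n : ℕ) : entRV (pn PS 𝒰 n) (SnB 𝒰 n) = n * ent PS :=
    (entRV_prodPMF (ι := Fin n) hp fun su => su.1).trans <| by
      rw [Fintype.card_fin, entRV, distOf_p1_fst]
  have hcorr (n : ℕ) : MI (pn PS 𝒰 n) (XnB f n) (YnB f n) = n * ℓ :=
    (MI_prodPMF (ι := Fin n) hp (fun su => (f su).1) fun su => (f su).2).trans <| by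
      rw [Fintype.card_fin, hMI]
  have hPe (n : ℕ) := PeB_eq_rejectionProb hPS.1 hg ℓ γ n
  have hrej := tendsto_rejectionProb hPS hMI hγtop
  refine ⟨fun n _ => ⟨hPe n, hsecX n, hsecY n, hentS n, hcorr n⟩, by simpa only [hPe] using hrej,
    le_liminf_exponent hPS hγ0 hrej, ?_, ?_, ?_⟩
  · simp [MI_eq_entRV_sub_condEnt, hsecX]
  · simp [MI_eq_entRV_sub_condEnt, hsecY]
  · refine tendsto_const_nhds.congr' ?_
    filter_upwards [eventually_ne_atTop 0] with n hn
    rw [hcorr, mul_div_cancel_left₀ ℓ (Nat.cast_ne_zero.2 hn)]
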